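/- Assume in addition that τ(s) > 0 for all s, let θ be an angle function for α, and let v*(s) = −g(s)·sin θ(s)/(f(s)² + g(s)²) (so that s ↦ φ(s, v*(s)) is the striction line of the C-ruled surface). Then for all s: (φ_s × φ_v)(s, v*(s)) = (f(s)·sin θ(s)/(f(s)² + g(s)²))·(−f(s)·N(s) + g(s)·W(s)), and hence the unit normal of the C-ruled surface along the striction line is n(s, v*(s)) = (−f(s)·N(s) + g(s)·W(s))/√(f(s)² + g(s)²). -/

import Mathlib

open RealInnerProductSpace

/-- Cross product on `EuclideanSpace ℝ (Fin 3)`. -/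
noncomputable def cross3 (u v : EuclideanSpace ℝ (Fin 3)) : EuclideanSpace ℝ (Fin 3) :=
  (EuclideanSpace.equiv (Fin 3) ℝ).symm
    (crossProduct ((EuclideanSpace.equiv (Fin 3) ℝ) u) ((EuclideanSpace.equiv (Fin 3) ℝ) v))

/-- Determinant of the 3×3 matrix whose rows are the given vectors. -/
noncomputable def det3 (u v w : EuclideanSpace ℝ (Fin 3)) : ℝ :=
  Matrix.det (Matrix.of ![(EuclideanSpace.equiv (Fin 3) ℝ) u,
    (EuclideanSpace.equiv (Fin 3) ℝ) v, (EuclideanSpace.equiv (Fin 3) ℝ) w])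

/-- The components of `cross3`. -/
theorem cross3_apply (u v : EuclideanSpace ℝ (Fin 3)) :
    cross3 u v 0 = u 1 * v 2 - u 2 * v 1 ∧ cross3 u v 1 = u 2 * v 0 - u 0 * v 2 ∧
      cross3 u v 2 = u 0 * v 1 - u 1 * v 0 := by
  simp [cross3, cross_apply]

theorem inner_fin_three (u v : EuclideanSpace ℝ (Fin 3)) :
    ⟪u, v⟫ = u 0 * v 0 + u 1 * v 1 + u 2 * v 2 := by
  simp [PiLp.inner_apply, Fin.sum_univ_three, mul_comm]

theorem cross3_add_left (u v w : EuclideanSpace ℝ (Fin 3)) :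
    cross3 (u + v) w = cross3 u w + cross3 v w := by
  simp [cross3]

theorem cross3_add_right (u v w : EuclideanSpace ℝ (Fin 3)) :
    cross3 u (v + w) = cross3 u v + cross3 u w := by
  simp [cross3]

theorem cross3_smul_left (c : ℝ) (u v : EuclideanSpace ℝ (Fin 3)) :
    cross3 (c • u) v = c • cross3 u v := by
  simp [cross3]

theorem cross3_smul_right (c : ℝ) (u v : EuclideanSpace ℝ (Fin 3)) :
    cross3 u (c • v) = c • cross3 u v := by
  simp [cross3]

theorem cross3_self (u : EuclideanSpace ℝ (Fin 3)) : cross3 u u = 0 := by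
  simp [cross3]

theorem cross3_anticomm (u v : EuclideanSpace ℝ (Fin 3)) : -cross3 u v = cross3 v u := by
  rw [cross3, cross3, ← cross_anticomm, map_neg, neg_neg]

theorem cross3_cross3 (u v w : EuclideanSpace ℝ (Fin 3)) :
    cross3 u (cross3 v w) = ⟪u, w⟫ • v - ⟪u, v⟫ • w := by
  ext i
  fin_cases i <;> simp [cross3_apply, inner_fin_three] <;> ring

theorem inner_self_cross3 (u v : EuclideanSpace ℝ (Fin 3)) : ⟪u, cross3 u v⟫ = 0 := by
  simp only [inner_fin_three, cross3_apply]
  ring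

theorem inner_cross3_self (u v : EuclideanSpace ℝ (Fin 3)) : ⟪v, cross3 u v⟫ = 0 := by
  simp only [inner_fin_three, cross3_apply]
  ring

theorem inner_cross3_cross3 (u v : EuclideanSpace ℝ (Fin 3)) :
    ⟪cross3 u v, cross3 u v⟫ = ⟪u, u⟫ * ⟪v, v⟫ - ⟪u, v⟫ ^ 2 := by
  simp only [inner_fin_three, cross3_apply]
  ring

theorem HasDerivAt.cross3 {u v : ℝ → EuclideanSpace ℝ (Fin 3)} {u' v' : EuclideanSpace ℝ (Fin 3)}
    {s : ℝ} (hu : HasDerivAt u u' s) (hv : HasDerivAt v v' s) :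
    HasDerivAt (fun t => cross3 (u t) (v t)) (cross3 u' (v s) + cross3 (u s) v') s := by
  let b : EuclideanSpace ℝ (Fin 3) →ₗ[ℝ] EuclideanSpace ℝ (Fin 3) →ₗ[ℝ] EuclideanSpace ℝ (Fin 3) :=
    LinearMap.mk₂ ℝ _root_.cross3 cross3_add_left cross3_smul_left cross3_add_right
      fun c u v => cross3_smul_right c u v
  rw [add_comm]
  exact b.toContinuousBilinearMap.hasDerivAt_of_bilinear (fun _ => hu) fun _ => hv

/-- Expansion of a vector in the positively oriented orthonormal frame `t, n, t × n`. -/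
theorem eq_inner_smul_frame {t n : EuclideanSpace ℝ (Fin 3)} (htt : ⟪t, t⟫ = 1) (hnn : ⟪n, n⟫ = 1)
    (htn : ⟪t, n⟫ = 0) (x : EuclideanSpace ℝ (Fin 3)) :
    x = ⟪x, t⟫ • t + ⟪x, n⟫ • n + ⟪x, cross3 t n⟫ • cross3 t n := by
  have hbb := inner_cross3_cross3 t n
  rw [htt, hnn, htn] at hbb
  have hon : Orthonormal ℝ ![t, n, cross3 t n] := by
    rw [orthonormal_iff_ite]
    intro i j
    fin_cases i <;> fin_cases j <;>
      simp [htt, hnn, htn, hbb, inner_self_cross3, inner_cross3_self, real_inner_comm,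
        -inner_self_eq_norm_sq_to_K]
  let b := (basisOfOrthonormalOfCardEqFinrank hon (by simp)).toOrthonormalBasis (by simpa using hon)
  have h := b.sum_repr' x
  simpa [b, Fin.sum_univ_three, real_inner_comm] using h.symm

/-- A differentiable curve with constant inner square is orthogonal to its derivative. -/
theorem inner_deriv_self_of_inner_const {n : ℝ → EuclideanSpace ℝ (Fin 3)} {c s : ℝ}
    (hn : ∀ s, ⟪n s, n s⟫ = c) (hd : DifferentiableAt ℝ n s) : ⟪deriv n s, n s⟫ = 0 := by
  have h := hd.hasDerivAt.inner ℝ hd.hasDerivAt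
  have h0 := h.unique ((hasDerivAt_const s c).congr_of_eventuallyEq
    (Filter.Eventually.of_forall hn))
  rw [real_inner_comm] at h0
  linarith

/-- Frenet equation of the binormal `t × n`, where `t' = k n`. -/
theorem hasDerivAt_binormal {t n : ℝ → EuclideanSpace ℝ (Fin 3)} {k s : ℝ}
    (ht : ∀ s, ⟪t s, t s⟫ = 1) (hn : ∀ s, ⟪n s, n s⟫ = 1) (htn : ∀ s, ⟪t s, n s⟫ = 0)
    (ht' : HasDerivAt t (k • n s) s) (hd : DifferentiableAt ℝ n s) :
    HasDerivAt (fun u => cross3 (t u) (n u)) (-⟪deriv n s, cross3 (t s) (n s)⟫ • n s) s := by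
  have hn' := hd.hasDerivAt
  have hnn' := inner_deriv_self_of_inner_const hn hd
  have hb := ht'.cross3 hn'
  convert hb using 1
  have hx := eq_inner_smul_frame (ht s) (hn s) (htn s) (deriv n s)
  conv_rhs => rw [hx]
  simp [cross3_add_right, cross3_smul_right, cross3_smul_left, cross3_self, hnn', cross3_cross3,
    ht, htn, -inner_self_eq_norm_sq_to_K]

theorem stmt_16
    (α : ℝ → EuclideanSpace ℝ (Fin 3))
    (hα : ContDiff ℝ (⊤ : ℕ∞) α)
    (hunit : ∀ s, ‖deriv α s‖ = 1)
    (T : ℝ → EuclideanSpace ℝ (Fin 3)) (hT : ∀ s, T s = deriv α s)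
    (κ : ℝ → ℝ) (hκ : ∀ s, κ s = ‖deriv (deriv α) s‖) (hκpos : ∀ s, 0 < κ s)
    (N : ℝ → EuclideanSpace ℝ (Fin 3)) (hN : ∀ s, N s = (κ s)⁻¹ • deriv (deriv α) s)
    (B : ℝ → EuclideanSpace ℝ (Fin 3)) (hB : ∀ s, B s = cross3 (T s) (N s))
    (τ : ℝ → ℝ) (hτ : ∀ s, τ s = ⟪deriv N s, B s⟫)
    (f : ℝ → ℝ) (hf : ∀ s, f s = Real.sqrt (κ s ^ 2 + τ s ^ 2))
    (g : ℝ → ℝ) (hg : ∀ s, g s = κ s ^ 2 / (κ s ^ 2 + τ s ^ 2) * deriv (fun u => τ u / κ u) s)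
    (C : ℝ → EuclideanSpace ℝ (Fin 3))
    (hC : ∀ s, C s = (Real.sqrt (κ s ^ 2 + τ s ^ 2))⁻¹ • ((-κ s) • T s + τ s • B s))
    (W : ℝ → EuclideanSpace ℝ (Fin 3))
    (hW : ∀ s, W s = (Real.sqrt (κ s ^ 2 + τ s ^ 2))⁻¹ • (τ s • T s + κ s • B s))
    (θ : ℝ → ℝ) (hθdiff : Differentiable ℝ θ)
    (hθderiv : ∀ s, deriv θ s = g s)
    (hθκ : ∀ s, κ s = f s * Real.cos (θ s))
    (hθτ : ∀ s, τ s = f s * Real.sin (θ s))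
    (φs φv : ℝ → ℝ → EuclideanSpace ℝ (Fin 3))
    (hφs : ∀ s v, φs s v = deriv (fun u => α u + v • C u) s)
    (hφv : ∀ s v, φv s v = deriv (fun w => α s + w • C s) v)
    (hτpos : ∀ s : ℝ, 0 < τ s)
    (vstar : ℝ → ℝ)
    (hvstar : ∀ s : ℝ, vstar s = -(g s * Real.sin (θ s)) / (f s ^ 2 + g s ^ 2)) :
    ∀ s : ℝ,
      cross3 (φs s (vstar s)) (φv s (vstar s)) =
        (f s * Real.sin (θ s) / (f s ^ 2 + g s ^ 2)) • ((-f s) • N s + g s • W s) ∧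
      (‖cross3 (φs s (vstar s)) (φv s (vstar s))‖)⁻¹ • cross3 (φs s (vstar s)) (φv s (vstar s)) =
        (Real.sqrt (f s ^ 2 + g s ^ 2))⁻¹ • ((-f s) • N s + g s • W s) := by
  have hT' : deriv α = T := funext fun s => (hT s).symm
  rw [hT'] at hunit hκ hN
  have hα2 : ContDiff ℝ 2 T := hT' ▸ ((contDiff_succ_iff_deriv (n := 2)).1 (hα.of_le
    (WithTop.coe_le_coe.2 (le_top : (3 : ℕ∞) ≤ ⊤)))).2.2
  have hTd : Differentiable ℝ T := hα2.differentiable (by norm_num)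
  have hT'd : Differentiable ℝ (deriv T) :=
    ((contDiff_succ_iff_deriv (n := 1)).1 hα2).2.2.differentiable (by norm_num)
  have hκ0 : ∀ s, κ s ≠ 0 := fun s => (hκpos s).ne'
  have hTN : ∀ s, deriv T s = κ s • N s := fun s => by rw [hN, smul_inv_smul₀ (hκ0 s)]
  have hTT : ∀ s, ⟪T s, T s⟫ = 1 := fun s => by rw [real_inner_self_eq_norm_sq, hunit, one_pow]
  have hNN : ∀ s, ⟪N s, N s⟫ = 1 := fun s => by
    rw [real_inner_self_eq_norm_sq, hN, norm_smul, ← hκ, norm_inv, Real.norm_of_nonneg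
      (hκpos s).le, inv_mul_cancel₀ (hκ0 s), one_pow]
  have hTperp : ∀ s, ⟪T s, N s⟫ = 0 := fun s => by
    have h := inner_deriv_self_of_inner_const hTT (hTd s)
    rw [hTN, inner_smul_left, real_inner_comm] at h
    simpa [hκ0 s] using h
  have hNd : Differentiable ℝ N := fun s => by
    have hκd : DifferentiableAt ℝ κ s := by
      rw [funext hκ]
      exact (hT'd s).norm ℝ (norm_pos_iff.1 (hκ s ▸ hκpos s))
    rw [funext hN]
    exact (hκd.inv (hκ0 s)).smul (hT'd s)
  have hBderiv : ∀ s, HasDerivAt B (-τ s • N s) s := fun s => by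
    rw [hτ, hB, funext hB]
    exact hasDerivAt_binormal hTT hNN hTperp (hTN s ▸ (hTd s).hasDerivAt) (hNd s)
  have hfpos : ∀ s, 0 < f s := fun s => by
    rw [hf]
    have := hκpos s
    positivity
  have hCθ : ∀ s, C s = (-Real.cos (θ s)) • T s + Real.sin (θ s) • B s := fun s => by
    have hf0 := (hfpos s).ne'
    rw [hC, ← hf, hθκ, hθτ]
    match_scalars <;> field_simp
  have hWθ : ∀ s, W s = Real.sin (θ s) • T s + Real.cos (θ s) • B s := fun s => by
    have hf0 := (hfpos s).ne'
    rw [hW, ← hf, hθκ, hθτ]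
    match_scalars <;> field_simp
  intro s
  have hf0 := (hfpos s).ne'
  have hfg : 0 < f s ^ 2 + g s ^ 2 := by have := hfpos s; positivity
  have hCderiv : HasDerivAt C ((-f s) • N s + g s • W s) s := by
    have hθ' : HasDerivAt θ (g s) s := hθderiv s ▸ (hθdiff s).hasDerivAt
    rw [funext hCθ, hWθ]
    refine ((hθ'.cos.neg.smul (hTd s).hasDerivAt).add (hθ'.sin.smul (hBderiv s))).congr_deriv ?_
    rw [hTN, hθκ s, hθτ s, Pi.neg_apply]
    match_scalars
    · linear_combination (-f s) * Real.sin_sq_add_cos_sq (θ s)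
    all_goals ring
  have hφs' : φs s (vstar s) = T s + vstar s • ((-f s) • N s + g s • W s) := by
    rw [hφs, hT]
    exact ((hα.differentiable (by simp) s).hasDerivAt.add (hCderiv.const_smul (vstar s))).deriv
  have hφv' : φv s (vstar s) = C s := by
    rw [hφv]
    simpa using (((hasDerivAt_id (vstar s)).smul_const (C s)).const_add (α s)).deriv
  have hNB : cross3 (N s) (B s) = T s := by
    rw [hB, cross3_cross3, real_inner_comm (T s) (N s), hTperp, hNN]
    simp
  have hTB : cross3 (T s) (B s) = -N s := by
    rw [hB, cross3_cross3, hTperp, hTT]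
    simp
  have hBT : cross3 (B s) (T s) = N s := by rw [← cross3_anticomm, hTB, neg_neg]
  have hNT : cross3 (N s) (T s) = -B s := by rw [← cross3_anticomm, hB]
  have hcross : cross3 (φs s (vstar s)) (φv s (vstar s)) =
      (f s * Real.sin (θ s) / (f s ^ 2 + g s ^ 2)) • ((-f s) • N s + g s • W s) := by
    rw [hφs', hφv', hCθ, hWθ, hvstar]
    simp only [cross3_add_left, cross3_add_right, cross3_smul_left, cross3_smul_right, cross3_self,
      hNB, hTB, hBT, hNT]
    match_scalars
    all_goals field_simp
    · linear_combination (g s ^ 2 * Real.sin (θ s)) * Real.sin_sq_add_cos_sq (θ s)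
  have hnorm : ‖(-f s) • N s + g s • W s‖ = Real.sqrt (f s ^ 2 + g s ^ 2) := by
    have hTB0 : ⟪T s, B s⟫ = 0 := hB s ▸ inner_self_cross3 _ _
    have hNB0 : ⟪N s, B s⟫ = 0 := hB s ▸ inner_cross3_self _ _
    have hBB : ⟪B s, B s⟫ = 1 := by
      rw [hB, inner_cross3_cross3, hTT, hNN, hTperp]
      norm_num
    rw [norm_eq_sqrt_real_inner, hWθ]
    congr 1
    simp only [inner_add_left, inner_add_right, real_inner_smul_left, real_inner_smul_right,
      real_inner_comm (T s) (N s), real_inner_comm (T s) (B s), real_inner_comm (N s) (B s),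
      hTT, hNN, hTperp, hTB0, hNB0, hBB]
    linear_combination g s ^ 2 * Real.sin_sq_add_cos_sq (θ s)
  have hcoef : 0 < f s * Real.sin (θ s) / (f s ^ 2 + g s ^ 2) :=
    div_pos (hθτ s ▸ hτpos s) hfg
  refine ⟨hcross, ?_⟩
  rw [hcross, norm_smul, Real.norm_of_nonneg hcoef.le, hnorm, smul_smul, mul_inv, mul_right_comm,
    inv_mul_cancel₀ hcoef.ne', one_mul]
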